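/- arXiv:1906.01856 — 2 statements merged into one kernel-verified Lean document; each statement's English description precedes it below -/
import Mathlib

section
/- Let a, b, c be nonzero complex numbers with a + b + c = 0 such that b/a is not real (so the triangle with sides a, b, c is non-degenerate), and let φ_a ∈ ℝ satisfy Re(e^{iφ_a/2}·a) = 0. Then the function f(φ) = |Re(e^{iφ/2}·b)| − |Re(e^{iφ/2}·c)| vanishes at φ = φ_a and changes sign there: there exists ε > 0 such that for all 0 < δ < ε, f(φ_a − δ) and f(φ_a + δ) are nonzero and have opposite signs. -/
open Complex Real

lemma rot_aux (φ s : ℝ) (z : ℂ) :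
    (Complex.exp (Complex.I * ((φ + s : ℝ) : ℂ) / 2) * z).re =
      (Complex.exp (Complex.I * (φ : ℂ) / 2) * z).re * Real.cos (s / 2) -
      (Complex.exp (Complex.I * (φ : ℂ) / 2) * z).im * Real.sin (s / 2) := by
  have h : Complex.exp (Complex.I * ((φ + s : ℝ) : ℂ) / 2) * z =
      (Complex.exp (Complex.I * (φ : ℂ) / 2) * z) * Complex.exp (((s / 2 : ℝ) : ℂ) * Complex.I) := by
    rw [mul_right_comm, ← Complex.exp_add]
    congr 2
    push_cast
    ring
  rw [h, Complex.mul_re, Complex.exp_ofReal_mul_I_re, Complex.exp_ofReal_mul_I_im]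

lemma ev_aux (p q : ℝ) (hp : p ≠ 0) :
    ∀ᶠ s : ℝ in nhds 0, 0 < p * (p * Real.cos (s / 2) - q * Real.sin (s / 2)) := by
  have hc : ContinuousAt
      (fun s : ℝ => p * (p * Real.cos (s / 2) - q * Real.sin (s / 2))) 0 := by
    fun_prop
  refine hc.eventually (lt_mem_nhds ?_)
  simpa using hp

lemma abs_aux (p u v : ℝ) (hu : 0 < p * u) (hv : 0 < p * v) :
    |u| - |-v| = SignType.sign p * (u - v) := by
  rw [abs_neg]
  rcases lt_trichotomy p 0 with h | h | h
  · have h1 : u < 0 := by by_contra hh; nlinarith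
    have h2 : v < 0 := by by_contra hh; nlinarith
    rw [abs_of_neg h1, abs_of_neg h2, sign_neg h]
    simp
    ring
  · simp [h] at hu
  · have h1 : 0 < u := by by_contra hh; nlinarith
    have h2 : 0 < v := by by_contra hh; nlinarith
    rw [abs_of_pos h1, abs_of_pos h2, sign_pos h]
    simp

/-- Sign-change assertion of the triangle lemma: for a non-degenerate triangle
`a + b + c = 0`, the difference of the lengths of the real-axis projections of
the rotated sides `b` and `c` vanishes at the critical angle of `a` and
changes sign there. -/
theorem sign_change_at_critical_angle (a b c : ℂ)
    (ha : a ≠ 0) (hb : b ≠ 0) (hc : c ≠ 0)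
    (hsum : a + b + c = 0) (hnd : (b / a).im ≠ 0)
    (φa : ℝ) (hφa : (Complex.exp (Complex.I * (φa : ℂ) / 2) * a).re = 0) :
    (fun φ : ℝ => |(Complex.exp (Complex.I * (φ : ℂ) / 2) * b).re| -
        |(Complex.exp (Complex.I * (φ : ℂ) / 2) * c).re|) φa = 0 ∧
    ∃ ε > 0, ∀ δ : ℝ, 0 < δ → δ < ε →
      (fun φ : ℝ => |(Complex.exp (Complex.I * (φ : ℂ) / 2) * b).re| -
          |(Complex.exp (Complex.I * (φ : ℂ) / 2) * c).re|) (φa - δ) ≠ 0 ∧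
      (fun φ : ℝ => |(Complex.exp (Complex.I * (φ : ℂ) / 2) * b).re| -
          |(Complex.exp (Complex.I * (φ : ℂ) / 2) * c).re|) (φa + δ) ≠ 0 ∧
      (fun φ : ℝ => |(Complex.exp (Complex.I * (φ : ℂ) / 2) * b).re| -
          |(Complex.exp (Complex.I * (φ : ℂ) / 2) * c).re|) (φa - δ) *
        (fun φ : ℝ => |(Complex.exp (Complex.I * (φ : ℂ) / 2) * b).re| -
          |(Complex.exp (Complex.I * (φ : ℂ) / 2) * c).re|) (φa + δ) < 0 := by
  have hsumE : ∀ E : ℂ, E * c = -(E * a) - E * b := fun E => by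
    linear_combination E * hsum
  have hE0 := Complex.exp_ne_zero (Complex.I * (φa : ℂ) / 2)
  have hrot := rot_aux φa
  generalize hE : Complex.exp (Complex.I * (φa : ℂ) / 2) = E at *
  have hC := hsumE E
  have hA0 : E * a ≠ 0 := mul_ne_zero hE0 ha
  have hdiv : b / a = (E * b) / (E * a) := by field_simp
  rw [hdiv] at hnd
  have hCre : (E * c).re = -(E * b).re := by rw [hC]; simp only [Complex.sub_re, Complex.neg_re, hφa]; ring
  have hCim : (E * c).im = -(E * a).im - (E * b).im := by rw [hC]; simp only [Complex.sub_im, Complex.neg_im]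
  have hy : (E * a).im ≠ 0 := fun h => hA0 (Complex.ext hφa h)
  have hp : (E * b).re ≠ 0 := by
    intro h
    apply hnd
    rw [Complex.div_im, h, hφa]
    simp
  have key : ∀ s : ℝ,
      0 < (E * b).re * ((E * b).re * Real.cos (s / 2) - (E * b).im * Real.sin (s / 2)) →
      0 < (E * b).re * ((E * b).re * Real.cos (s / 2) -
        ((E * a).im + (E * b).im) * Real.sin (s / 2)) →
      |(Complex.exp (Complex.I * ((φa + s : ℝ) : ℂ) / 2) * b).re| -
        |(Complex.exp (Complex.I * ((φa + s : ℝ) : ℂ) / 2) * c).re| =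
      (SignType.sign (E * b).re * (E * a).im) * Real.sin (s / 2) := by
    intro s h1 h2
    rw [hrot s b, hrot s c, hCre, hCim]
    have := abs_aux _ _ _ h1 h2
    rw [show -(E * b).re * Real.cos (s / 2) - (-(E * a).im - (E * b).im) * Real.sin (s / 2) =
      -((E * b).re * Real.cos (s / 2) - ((E * a).im + (E * b).im) * Real.sin (s / 2)) by ring, this]
    ring
  have hk : ((SignType.sign (E * b).re : ℝ) * (E * a).im) ≠ 0 := by
    refine mul_ne_zero ?_ hy
    rcases lt_or_gt_of_ne hp with h | h
    · rw [sign_neg h]; simp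
    · rw [sign_pos h]; simp
  refine ⟨?_, ?_⟩
  · simp only [hE, hCre, abs_neg, sub_self]
  obtain ⟨ε, hε, H⟩ := Metric.eventually_nhds_iff.1
    ((ev_aux (E * b).re (E * b).im hp).and (ev_aux (E * b).re ((E * a).im + (E * b).im) hp))
  refine ⟨min ε 1, lt_min hε one_pos, fun δ h0 hδ => ?_⟩
  have hδε : δ < ε := hδ.trans_le (min_le_left _ _)
  have hδ1 : δ < 1 := hδ.trans_le (min_le_right _ _)
  have Hp := H (y := δ) (by rw [Real.dist_eq, sub_zero, abs_of_pos h0]; exact hδε)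
  have Hm := H (y := -δ) (by rw [Real.dist_eq, sub_zero, abs_neg, abs_of_pos h0]; exact hδε)
  have e1 := key δ Hp.1 Hp.2
  have e2 := key (-δ) Hm.1 Hm.2
  rw [← sub_eq_add_neg, neg_div, Real.sin_neg] at e2
  have hs : 0 < Real.sin (δ / 2) :=
    Real.sin_pos_of_pos_of_lt_pi (by linarith) (by linarith [Real.pi_gt_three])
  beta_reduce
  rw [e1, e2]
  refine ⟨mul_ne_zero hk (neg_ne_zero.2 hs.ne'), mul_ne_zero hk hs.ne', ?_⟩
  have := mul_pos (mul_self_pos.2 hk) (mul_self_pos.2 hs.ne')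
  linarith
end

section
/- Let A, B, C be 2×2 complex matrices of determinant 1. Set a = tr A, b = tr B, c = tr C, d = tr(ABC), and x = tr(AB), y = tr(BC), z = tr(CA). Then x·y·z + x² + y² + z² − (ab + cd)·x − (bc + ad)·y − (ca + bd)·z + (a² + b² + c² + d² + abcd − 4) = 0. -/
open Matrix

/-- The Fricke–Klein trace identity for a triple of `SL(2, ℂ)` matrices:
with `a = tr A`, `b = tr B`, `c = tr C`, `d = tr(ABC)`, `x = tr(AB)`,
`y = tr(BC)`, `z = tr(CA)`, one has
`xyz + x² + y² + z² − (ab+cd)x − (bc+ad)y − (ca+bd)z + (a²+b²+c²+d²+abcd−4) = 0`. -/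
theorem fricke_klein_identity (A B C : Matrix (Fin 2) (Fin 2) ℂ)
    (hA : A.det = 1) (hB : B.det = 1) (hC : C.det = 1) :
    Matrix.trace (A * B) * Matrix.trace (B * C) * Matrix.trace (C * A) +
      (Matrix.trace (A * B)) ^ 2 + (Matrix.trace (B * C)) ^ 2 +
      (Matrix.trace (C * A)) ^ 2 -
      (Matrix.trace A * Matrix.trace B + Matrix.trace C * Matrix.trace (A * B * C)) *
        Matrix.trace (A * B) -
      (Matrix.trace B * Matrix.trace C + Matrix.trace A * Matrix.trace (A * B * C)) *
        Matrix.trace (B * C) -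
      (Matrix.trace C * Matrix.trace A + Matrix.trace B * Matrix.trace (A * B * C)) *
        Matrix.trace (C * A) +
      ((Matrix.trace A) ^ 2 + (Matrix.trace B) ^ 2 + (Matrix.trace C) ^ 2 +
        (Matrix.trace (A * B * C)) ^ 2 +
        Matrix.trace A * Matrix.trace B * Matrix.trace C * Matrix.trace (A * B * C) - 4)
      = 0 := by
  have key : Matrix.trace (A * B) * Matrix.trace (B * C) * Matrix.trace (C * A) +
      C.det * (Matrix.trace (A * B)) ^ 2 + A.det * (Matrix.trace (B * C)) ^ 2 +
      B.det * (Matrix.trace (C * A)) ^ 2 -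
      (C.det * (Matrix.trace A * Matrix.trace B) +
        Matrix.trace C * Matrix.trace (A * B * C)) * Matrix.trace (A * B) -
      (A.det * (Matrix.trace B * Matrix.trace C) +
        Matrix.trace A * Matrix.trace (A * B * C)) * Matrix.trace (B * C) -
      (B.det * (Matrix.trace C * Matrix.trace A) +
        Matrix.trace B * Matrix.trace (A * B * C)) * Matrix.trace (C * A) +
      (B.det * C.det * (Matrix.trace A) ^ 2 + A.det * C.det * (Matrix.trace B) ^ 2 +
        A.det * B.det * (Matrix.trace C) ^ 2 + (Matrix.trace (A * B * C)) ^ 2 +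
        Matrix.trace A * Matrix.trace B * Matrix.trace C * Matrix.trace (A * B * C) -
        4 * A.det * B.det * C.det) = 0 := by
    simp only [Matrix.trace_fin_two, Matrix.det_fin_two, Matrix.mul_apply, Fin.sum_univ_two]
    ring
  rw [hA, hB, hC] at key
  linear_combination key
end
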